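/- Weak-constraint quadratic inequality for the control error. Suppose e_y^0,…,e_y^K ∈ Y, e_p^1,…,e_p^{K+1} ∈ Y and e_u^1,…,e_u^K ∈ U, together with linear functionals r̃_y^1,…,r̃_y^K and r̃_p^1,…,r̃_p^K on Y and r̃_u^1,…,r̃_u^K on U, satisfy: (i) m(e_y^k − e_y^{k−1}, φ) + τ a(e_y^k, φ) = τ r̃_y^k(φ) + τ b(e_u^k, φ) for all φ ∈ Y and k = 1,…,K; (ii) m(φ, e_p^k − e_p^{k+1}) + τ a(φ, e_p^k) = τ r̃_p^k(φ) − τ (C e_y^k, C φ)_D for all φ ∈ Y and k = 1,…,K; (iii) (e_u^k, ψ)_U − b(ψ, e_p^k) = r̃_u^k(ψ) for all ψ ∈ U and k = 1,…,K; with e_p^{K+1} = 0 and e_y^0 = 0. Set R̃_y = (τ Σ_{k=1}^K ‖r̃_y^k‖_{Y'}²)^{1/2}, R̃_p = (τ Σ_{k=1}^K ‖r̃_p^k‖_{Y'}²)^{1/2} and R̃_u = (τ Σ_{k=1}^K ‖r̃_u^k‖_{U'}²)^{1/2}. Then τ Σ_{k=1}^K ‖e_u^k‖_U² ≤ (R̃_u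 + (√2 γ_b/α_LB) R̃_p) · (τ Σ_{k=1}^K ‖e_u^k‖_U²)^{1/2} + (2√2/α_LB) R̃_y R̃_p + (γ_c²/(2 α_LB²)) R̃_y². -/

import Mathlib

set_option autoImplicit false

open Finset RealInnerProductSpace

/-- Dual norm of a functional `r` over the nonzero elements of `S`,
with respect to the norm function `nrm`. -/
noncomputable def dualNorm {Y : Type*} [Zero Y] (nrm : Y → ℝ) (S : Set Y) (r : Y → ℝ) : ℝ :=
  sSup {x : ℝ | ∃ v ∈ S, v ≠ 0 ∧ x = r v / nrm v}

set_option maxHeartbeats 1000000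

theorem aux_dual {H Y : Type*} [NormedAddCommGroup H] [InnerProductSpace ℝ H]
    [NormedAddCommGroup Y] [InnerProductSpace ℝ Y] [FiniteDimensional ℝ Y]
    (p : Y →ₗ[ℝ] H) (hp : Function.Injective p) (S : Submodule ℝ Y) (r : Y →ₗ[ℝ] ℝ)
    (v : Y) (hv : v ∈ S) :
    |r v| ≤ dualNorm (fun v : Y => ‖p v‖) (S : Set Y) ⇑r * ‖p v‖ := by
  obtain ⟨K, hK, hanti⟩ := (LinearMap.injective_iff_antilipschitz p).1 hp
  have hb : BddAbove {x : ℝ | ∃ v ∈ (S : Set Y), v ≠ 0 ∧ x = r v / ‖p v‖} := by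
    refine ⟨‖LinearMap.toContinuousLinearMap r‖ * K, ?_⟩
    rintro x ⟨w, -, hw0, rfl⟩
    have hpw : 0 < ‖p w‖ := norm_pos_iff.2 (fun h => hw0 (hp (by simpa using h)))
    rw [div_le_iff₀ hpw]
    have h1 : r w ≤ ‖LinearMap.toContinuousLinearMap r‖ * ‖w‖ :=
      (le_abs_self _).trans ((LinearMap.toContinuousLinearMap r).le_opNorm w)
    have h2 : ‖w‖ ≤ K * ‖p w‖ := by
      have := hanti.le_mul_dist w 0
      simpa using this
    have h3 := mul_le_mul_of_nonneg_left h2 (norm_nonneg (LinearMap.toContinuousLinearMap r))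
    linarith
  have key : ∀ w ∈ S, r w ≤ dualNorm (fun v : Y => ‖p v‖) (S : Set Y) ⇑r * ‖p w‖ := by
    intro w hw
    by_cases hw0 : w = 0
    · simp [hw0]
    have hpw : 0 < ‖p w‖ := norm_pos_iff.2 (fun h => hw0 (hp (by simpa using h)))
    rw [← div_le_iff₀ hpw]
    exact le_csSup hb ⟨w, hw, hw0, rfl⟩
  rw [abs_le]
  have := key (-v) (S.neg_mem hv)
  simp only [map_neg, norm_neg] at this
  exact ⟨by linarith, key v hv⟩

theorem aux_cs (τ : ℝ) (hτ : 0 < τ) (s : Finset ℕ) (x f g : ℕ → ℝ)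
    (h : ∀ k ∈ s, x k ≤ f k * g k) :
    τ * ∑ k ∈ s, x k ≤ Real.sqrt (τ * ∑ k ∈ s, f k ^ 2) * Real.sqrt (τ * ∑ k ∈ s, g k ^ 2) := by
  have h1 := Finset.sum_le_sum h
  have h2 := Real.sum_mul_le_sqrt_mul_sqrt s f g
  rw [Real.sqrt_mul hτ.le, Real.sqrt_mul hτ.le]
  calc _ ≤ τ * (Real.sqrt (∑ k ∈ s, f k ^ 2) * Real.sqrt (∑ k ∈ s, g k ^ 2)) :=
        mul_le_mul_of_nonneg_left (h1.trans h2) hτ.le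
    _ = (Real.sqrt τ * Real.sqrt τ) *
        (Real.sqrt (∑ k ∈ s, f k ^ 2) * Real.sqrt (∑ k ∈ s, g k ^ 2)) := by
        rw [Real.mul_self_sqrt hτ.le]
    _ = _ := by ring

theorem aux_tel1 {H : Type*} [NormedAddCommGroup H] [InnerProductSpace ℝ H] (y : ℕ → H) (n : ℕ) :
    ‖y n‖ ^ 2 - ‖y 0‖ ^ 2 ≤ 2 * ∑ k ∈ Icc 1 n, ⟪y k - y (k - 1), y k⟫ := by
  induction n with
  | zero => simp
  | succ n ih =>
    rw [Finset.sum_Icc_succ_top (by omega)]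
    simp only [Nat.add_sub_cancel]
    have := norm_sub_sq_real (y (n + 1)) (y n)
    have h0 := sq_nonneg ‖y (n + 1) - y n‖
    rw [inner_sub_left, real_inner_self_eq_norm_sq, real_inner_comm]
    linarith

theorem aux_tel2 {H : Type*} [NormedAddCommGroup H] [InnerProductSpace ℝ H] (y : ℕ → H) (n : ℕ) :
    ‖y 1‖ ^ 2 - ‖y (n + 1)‖ ^ 2 ≤ 2 * ∑ k ∈ Icc 1 n, ⟪y k, y k - y (k + 1)⟫ := by
  induction n with
  | zero => simp
  | succ n ih =>
    rw [Finset.sum_Icc_succ_top (by omega)]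
    have := norm_sub_sq_real (y (n + 1)) (y (n + 1 + 1))
    have h0 := sq_nonneg ‖y (n + 1) - y (n + 1 + 1)‖
    rw [inner_sub_right, real_inner_self_eq_norm_sq]
    linarith

theorem aux_tel3 {H : Type*} [NormedAddCommGroup H] [InnerProductSpace ℝ H] (y p : ℕ → H) (n : ℕ) :
    ∑ k ∈ Icc 1 n, ⟪y k - y (k - 1), p k⟫ - ∑ k ∈ Icc 1 n, ⟪y k, p k - p (k + 1)⟫
      = ⟪y n, p (n + 1)⟫ - ⟪y 0, p 1⟫ := by
  induction n with
  | zero => simp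
  | succ n ih =>
    rw [Finset.sum_Icc_succ_top (by omega), Finset.sum_Icc_succ_top (by omega)]
    simp only [Nat.add_sub_cancel]
    rw [inner_sub_left, inner_sub_right]
    linarith

theorem aux_div (α P X : ℝ) (hα : 0 < α) (hP : 0 ≤ P) (hX : 0 ≤ X) (h : α * P ^ 2 ≤ X * P) :
    P ≤ X / α := by
  rw [le_div_iff₀ hα]
  rcases hP.eq_or_lt with h0 | h0
  · rw [← h0]; simpa using hX
  · nlinarith

/-- Weak-constraint quadratic inequality for the control error. -/
theorem weak_constraint_quadratic_inequality
    {H Y D : Type*} [NormedAddCommGroup H] [InnerProductSpace ℝ H]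
    [NormedAddCommGroup Y] [InnerProductSpace ℝ Y] [FiniteDimensional ℝ Y]
    [NormedAddCommGroup D] [InnerProductSpace ℝ D]
    (ι : Y →ₗ[ℝ] H) (hι : Function.Injective ι)
    (U : Submodule ℝ Y)
    (a : Y →ₗ[ℝ] (Y →ₗ[ℝ] ℝ))
    (τ : ℝ) (hτ : 0 < τ) (K : ℕ) (hK : 1 ≤ K)
    (αLB : ℝ) (hαLB : 0 < αLB) (hcoer : ∀ v : Y, αLB * ‖v‖ ^ 2 ≤ a v v)
    (C : Y →ₗ[ℝ] D) (γc : ℝ) (hγc : ∀ v : Y, ‖C v‖ ≤ γc * ‖v‖)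
    (b : Y →ₗ[ℝ] (Y →ₗ[ℝ] ℝ)) (γb : ℝ)
    (hγb : ∀ w ∈ U, ∀ v : Y, |b w v| ≤ γb * ‖ι w‖ * ‖v‖)
    (ey ep eu : ℕ → Y) (heu : ∀ k, 1 ≤ k → k ≤ K → eu k ∈ U)
    (ry rp ru : ℕ → (Y →ₗ[ℝ] ℝ))
    (hstate : ∀ k, 1 ≤ k → k ≤ K → ∀ φ : Y,
      ⟪ι (ey k - ey (k - 1)), ι φ⟫ + τ * a (ey k) φ
        = τ * ry k φ + τ * b (eu k) φ)
    (hadj : ∀ k, 1 ≤ k → k ≤ K → ∀ φ : Y,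
      ⟪ι φ, ι (ep k - ep (k + 1))⟫ + τ * a φ (ep k)
        = τ * rp k φ - τ * ⟪C (ey k), C φ⟫)
    (hopt : ∀ k, 1 ≤ k → k ≤ K → ∀ ψ ∈ U,
      ⟪ι (eu k), ι ψ⟫ - b ψ (ep k) = ru k ψ)
    (hfin : ep (K + 1) = 0) (hinit : ey 0 = 0)
    (Ry Rp Ru : ℝ)
    (hRy : Ry = Real.sqrt (τ * ∑ k ∈ Icc 1 K, (dualNorm (fun v : Y => ‖v‖) Set.univ ⇑(ry k)) ^ 2))
    (hRp : Rp = Real.sqrt (τ * ∑ k ∈ Icc 1 K, (dualNorm (fun v : Y => ‖v‖) Set.univ ⇑(rp k)) ^ 2))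
    (hRu : Ru = Real.sqrt (τ * ∑ k ∈ Icc 1 K, (dualNorm (fun v : Y => ‖ι v‖) (U : Set Y) ⇑(ru k)) ^ 2)) :
    τ * ∑ k ∈ Icc 1 K, ‖ι (eu k)‖ ^ 2
      ≤ (Ru + Real.sqrt 2 * γb / αLB * Rp)
          * Real.sqrt (τ * ∑ k ∈ Icc 1 K, ‖ι (eu k)‖ ^ 2)
        + (2 * Real.sqrt 2 / αLB) * Ry * Rp + γc ^ 2 / (2 * αLB ^ 2) * Ry ^ 2 := by
  -- pointwise bounds
  have dY : ∀ (r : Y →ₗ[ℝ] ℝ) (v : Y),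
      |r v| ≤ dualNorm (fun v : Y => ‖v‖) Set.univ ⇑r * ‖v‖ := by
    intro r v
    have := aux_dual (LinearMap.id : Y →ₗ[ℝ] Y) (fun _ _ h => h) ⊤ r v trivial
    simpa using this
  have mem : ∀ k ∈ Icc 1 K, 1 ≤ k ∧ k ≤ K := fun k hk => Finset.mem_Icc.1 hk
  obtain ⟨E, hE⟩ : ∃ E, E = Real.sqrt (τ * ∑ k ∈ Icc 1 K, ‖ι (eu k)‖ ^ 2) := ⟨_, rfl⟩
  obtain ⟨N, hN⟩ : ∃ N, N = Real.sqrt (τ * ∑ k ∈ Icc 1 K, ‖ey k‖ ^ 2) := ⟨_, rfl⟩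
  obtain ⟨P, hP⟩ : ∃ P, P = Real.sqrt (τ * ∑ k ∈ Icc 1 K, ‖ep k‖ ^ 2) := ⟨_, rfl⟩
  obtain ⟨c, hc⟩ : ∃ c, c = Real.sqrt (τ * ∑ k ∈ Icc 1 K, ‖C (ey k)‖ ^ 2) := ⟨_, rfl⟩
  have sq : ∀ f : ℕ → ℝ, Real.sqrt (τ * ∑ k ∈ Icc 1 K, f k ^ 2) ^ 2
      = τ * ∑ k ∈ Icc 1 K, f k ^ 2 := fun f => Real.sq_sqrt
        (mul_nonneg hτ.le (Finset.sum_nonneg fun k _ => sq_nonneg _))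
  have hE2 := sq (fun k => ‖ι (eu k)‖)
  have hN2 := sq (fun k => ‖ey k‖)
  have hP2 := sq (fun k => ‖ep k‖)
  have hc2 := sq (fun k => ‖C (ey k)‖)
  rw [← hE] at hE2
  rw [← hN] at hN2
  rw [← hP] at hP2
  rw [← hc] at hc2
  have hE0 : 0 ≤ E := hE ▸ Real.sqrt_nonneg _
  have hN0 : 0 ≤ N := hN ▸ Real.sqrt_nonneg _
  have hP0 : 0 ≤ P := hP ▸ Real.sqrt_nonneg _
  have hc0 : 0 ≤ c := hc ▸ Real.sqrt_nonneg _
  have hRy0 : 0 ≤ Ry := hRy ▸ Real.sqrt_nonneg _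
  have hRp0 : 0 ≤ Rp := hRp ▸ Real.sqrt_nonneg _
  -- Cauchy-Schwarz bounds
  have b1 : τ * ∑ k ∈ Icc 1 K, ru k (eu k) ≤ Ru * E := by
    rw [hRu, hE]
    exact aux_cs τ hτ _ _ _ _ fun k hk => (le_abs_self _).trans
      (aux_dual ι hι U (ru k) (eu k) (heu k (mem k hk).1 (mem k hk).2))
  have b2 : τ * ∑ k ∈ Icc 1 K, rp k (ey k) ≤ Rp * N := by
    rw [hRp, hN]
    exact aux_cs τ hτ _ _ _ _ fun k hk => (le_abs_self _).trans (dY _ _)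
  have b3 : τ * ∑ k ∈ Icc 1 K, -(ry k (ep k)) ≤ Ry * P := by
    rw [hRy, hP]
    exact aux_cs τ hτ _ _ _ _ fun k hk => (neg_le_abs _).trans (dY _ _)
  have b4 : τ * ∑ k ∈ Icc 1 K, ry k (ey k) ≤ Ry * N := by
    rw [hRy, hN]
    exact aux_cs τ hτ _ _ _ _ fun k hk => (le_abs_self _).trans (dY _ _)
  have b5 : τ * ∑ k ∈ Icc 1 K, rp k (ep k) ≤ Rp * P := by
    rw [hRp, hP]
    exact aux_cs τ hτ _ _ _ _ fun k hk => (le_abs_self _).trans (dY _ _)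
  have b6 : τ * ∑ k ∈ Icc 1 K, b (eu k) (ey k) ≤ |γb| * (E * N) := by
    have h1 : ∑ k ∈ Icc 1 K, b (eu k) (ey k) ≤ |γb| * ∑ k ∈ Icc 1 K, ‖ι (eu k)‖ * ‖ey k‖ := by
      rw [Finset.mul_sum]
      refine Finset.sum_le_sum fun k hk => (le_abs_self _).trans
        ((hγb _ (heu k (mem k hk).1 (mem k hk).2) (ey k)).trans ?_)
      rw [mul_assoc]
      exact mul_le_mul_of_nonneg_right (le_abs_self _) (by positivity)
    have h2 := aux_cs τ hτ (Icc 1 K) (fun k => ‖ι (eu k)‖ * ‖ey k‖) (fun k => ‖ι (eu k)‖)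
      (fun k => ‖ey k‖) (fun k _ => le_rfl)
    rw [← hE, ← hN] at h2
    have h3 := mul_le_mul_of_nonneg_left h2 (abs_nonneg γb)
    have h4 := mul_le_mul_of_nonneg_left h1 hτ.le
    linarith
  have b7 : τ * ∑ k ∈ Icc 1 K, -⟪C (ey k), C (ep k)⟫ ≤ |γc| * (c * P) := by
    have h1 : ∑ k ∈ Icc 1 K, -⟪C (ey k), C (ep k)⟫
        ≤ |γc| * ∑ k ∈ Icc 1 K, ‖C (ey k)‖ * ‖ep k‖ := by
      rw [Finset.mul_sum]
      refine Finset.sum_le_sum fun k hk => (neg_le_abs _).trans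
        ((abs_real_inner_le_norm _ _).trans ?_)
      have h5 : ‖C (ep k)‖ ≤ |γc| * ‖ep k‖ := (hγc _).trans
        (mul_le_mul_of_nonneg_right (le_abs_self _) (norm_nonneg _))
      have h6 := mul_le_mul_of_nonneg_left h5 (norm_nonneg (C (ey k)))
      linarith
    have h2 := aux_cs τ hτ (Icc 1 K) (fun k => ‖C (ey k)‖ * ‖ep k‖) (fun k => ‖C (ey k)‖)
      (fun k => ‖ep k‖) (fun k _ => le_rfl)
    rw [← hc, ← hP] at h2
    have h3 := mul_le_mul_of_nonneg_left h2 (abs_nonneg γc)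
    have h4 := mul_le_mul_of_nonneg_left h1 hτ.le
    linarith
  -- telescoping
  have t1 := aux_tel1 (fun k => ι (ey k)) K
  have t2 := aux_tel2 (fun k => ι (ep k)) K
  have t3 := aux_tel3 (fun k => ι (ey k)) (fun k => ι (ep k)) K
  simp only [hinit, hfin, map_zero, norm_zero, inner_zero_left, inner_zero_right] at t1 t2 t3
  -- summed equations
  have s1 : ∑ k ∈ Icc 1 K, ⟪ι (ey k) - ι (ey (k - 1)), ι (ey k)⟫
      + τ * ∑ k ∈ Icc 1 K, a (ey k) (ey k)
      = τ * ∑ k ∈ Icc 1 K, ry k (ey k) + τ * ∑ k ∈ Icc 1 K, b (eu k) (ey k) := by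
    simp only [Finset.mul_sum, ← Finset.sum_add_distrib]
    refine Finset.sum_congr rfl fun k hk => ?_
    rw [← hstate k (mem k hk).1 (mem k hk).2, map_sub]
  have s2 : ∑ k ∈ Icc 1 K, ⟪ι (ey k) - ι (ey (k - 1)), ι (ep k)⟫
      + τ * ∑ k ∈ Icc 1 K, a (ey k) (ep k)
      = τ * ∑ k ∈ Icc 1 K, ry k (ep k) + τ * ∑ k ∈ Icc 1 K, b (eu k) (ep k) := by
    simp only [Finset.mul_sum, ← Finset.sum_add_distrib]
    refine Finset.sum_congr rfl fun k hk => ?_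
    rw [← hstate k (mem k hk).1 (mem k hk).2, map_sub]
  have s3 : ∑ k ∈ Icc 1 K, ⟪ι (ep k), ι (ep k) - ι (ep (k + 1))⟫
      + τ * ∑ k ∈ Icc 1 K, a (ep k) (ep k)
      = τ * ∑ k ∈ Icc 1 K, rp k (ep k) + τ * ∑ k ∈ Icc 1 K, -⟪C (ey k), C (ep k)⟫ := by
    simp only [Finset.mul_sum, ← Finset.sum_add_distrib]
    refine Finset.sum_congr rfl fun k hk => ?_
    have := hadj k (mem k hk).1 (mem k hk).2 (ep k)
    rw [map_sub] at this
    linarith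
  have s4 : ∑ k ∈ Icc 1 K, ⟪ι (ey k), ι (ep k) - ι (ep (k + 1))⟫
      + τ * ∑ k ∈ Icc 1 K, a (ey k) (ep k) + τ * ∑ k ∈ Icc 1 K, ‖C (ey k)‖ ^ 2
      = τ * ∑ k ∈ Icc 1 K, rp k (ey k) := by
    simp only [Finset.mul_sum, ← Finset.sum_add_distrib]
    refine Finset.sum_congr rfl fun k hk => ?_
    have := hadj k (mem k hk).1 (mem k hk).2 (ey k)
    rw [map_sub, real_inner_self_eq_norm_sq] at this
    linarith
  have s5 : τ * ∑ k ∈ Icc 1 K, ‖ι (eu k)‖ ^ 2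
      = τ * ∑ k ∈ Icc 1 K, ru k (eu k) + τ * ∑ k ∈ Icc 1 K, b (eu k) (ep k) := by
    simp only [Finset.mul_sum, ← Finset.sum_add_distrib]
    refine Finset.sum_congr rfl fun k hk => ?_
    have := hopt k (mem k hk).1 (mem k hk).2 (eu k) (heu k (mem k hk).1 (mem k hk).2)
    rw [real_inner_self_eq_norm_sq] at this
    rw [← this]
    ring
  have co : ∀ f : ℕ → Y, αLB * (τ * ∑ k ∈ Icc 1 K, ‖f k‖ ^ 2)
      ≤ τ * ∑ k ∈ Icc 1 K, a (f k) (f k) := by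
    intro f
    rw [mul_left_comm]
    refine mul_le_mul_of_nonneg_left ?_ hτ.le
    rw [Finset.mul_sum]
    exact Finset.sum_le_sum fun k _ => hcoer _
  have c1 := co ey
  have c2 := co ep
  rw [← hN2] at c1
  rw [← hP2] at c2
  have e1 : N ≤ (Ry + |γb| * E) / αLB := by
    refine aux_div _ _ _ hαLB hN0 (by positivity) ?_
    linarith [sq_nonneg ‖ι (ey K)‖]
  have e2 : P ≤ (Rp + |γc| * c) / αLB := by
    refine aux_div _ _ _ hαLB hP0 (by positivity) ?_
    linarith [sq_nonneg ‖ι (ep 1)‖]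
  have hgE : |γb| * E = γb * E := by
    rcases le_or_gt 0 γb with h | h
    · rw [abs_of_nonneg h]
    · have hz : ∀ k ∈ Icc 1 K, ‖ι (eu k)‖ ^ 2 = 0 := by
        intro k hk
        by_contra hne
        have h0 : eu k ≠ 0 := by
          intro h0
          simp [h0] at hne
        have hi : 0 < ‖ι (eu k)‖ := norm_pos_iff.2 (fun h => h0 (hι (by simpa using h)))
        have hi' : 0 < ‖eu k‖ := norm_pos_iff.2 h0
        have h1 := (abs_nonneg _).trans (hγb _ (heu k (mem k hk).1 (mem k hk).2) (eu k))
        have h2 := mul_pos hi hi'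
        nlinarith
      have : E = 0 := by rw [hE, Finset.sum_eq_zero hz]; simp
      simp [this]
  have m1 := mul_le_mul_of_nonneg_left e1 hRp0
  have m2 := mul_le_mul_of_nonneg_left e2 hRy0
  have main : E ^ 2 ≤ Ru * E + Rp * ((Ry + |γb| * E) / αLB)
      + Ry * ((Rp + |γc| * c) / αLB) - c ^ 2 := by
    rw [Finset.sum_neg_distrib] at b3
    linarith
  have young : Ry * (|γc| * c / αLB) - c ^ 2 ≤ γc ^ 2 / (2 * αLB ^ 2) * Ry ^ 2 := by
    have e : γc ^ 2 / (2 * αLB ^ 2) * Ry ^ 2 = (|γc| * Ry / αLB) ^ 2 / 2 := by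
      rw [div_pow, mul_pow, sq_abs]
      field_simp
    have e' : Ry * (|γc| * c / αLB) = (|γc| * Ry / αLB) * c := by ring
    rw [e, e']
    nlinarith [sq_nonneg (|γc| * Ry / αLB - c), sq_nonneg c]
  have h2 : (1 : ℝ) ≤ Real.sqrt 2 := Real.one_le_sqrt.2 (by norm_num)
  rw [← hE2, Real.sqrt_sq hE0]
  have q1 : 0 ≤ (Real.sqrt 2 - 1) * (Rp * (|γb| * E) / αLB) :=
    mul_nonneg (by linarith) (by positivity)
  have q2 : 0 ≤ (Real.sqrt 2 - 1) * (2 * Ry * Rp / αLB) :=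
    mul_nonneg (by linarith) (by positivity)
  have fin : (Ru + Real.sqrt 2 * γb / αLB * Rp) * E + (2 * Real.sqrt 2 / αLB) * Ry * Rp
      = Ru * E + Rp * ((Ry + |γb| * E) / αLB) + Ry * (Rp / αLB)
        + (Real.sqrt 2 - 1) * (Rp * (|γb| * E) / αLB)
        + (Real.sqrt 2 - 1) * (2 * Ry * Rp / αLB) := by
    rw [hgE]
    ring
  have sp : Ry * ((Rp + |γc| * c) / αLB) = Ry * (Rp / αLB) + Ry * (|γc| * c / αLB) := by ring
  rw [fin]
  linarith
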